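/- Let p > 1, let μ, ν be probability measures on ℝ with finite p-th moments and distribution functions F and G, and let π be a coupling of μ and ν with joint distribution function H(x,y) = π((−∞,x] × (−∞,y]). Then ∫_{ℝ×ℝ} |y−x|^p dπ(x,y) = p(p−1) ∫_{−∞}^{∞} ∫_y^{∞} [G(y) − H(x,y)] (x−y)^{p−2} dx dy + p(p−1) ∫_{−∞}^{∞} ∫_x^{∞} [F(x) − H(x,y)] (y−x)^{p−2} dy dx. -/

import Mathlib

/-!
Since `π` has marginals with distribution functions `F` and `G`, the bracket `G y - H x y` is the
`π`-mass of the quadrant `{X > x, Y ≤ y}`, and `F x - H x y` is that of `{X ≤ x, Y > y}`. Writing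
the first mass as the integral of an indicator and applying Tonelli (`lintegral_half`), the first
double integral becomes the `π`-expectation of the integral of `(x-y)^(p-2)` over the triangle
`Y ≤ y < x < X`. This triangle integral is `(X-Y)₊^p / (p(p-1))` (`lintegral_triKernel`). The second
double integral is the first one for the law of `(Y, X)`, and `|Y-X|^p = (X-Y)₊^p + (Y-X)₊^p`.

The computation is done in `ℝ≥0∞`; finiteness of the `p`-th moments puts `X - Y` in `L^p(π)`, which
allows the passage to Bochner integrals (`integral_half`).
-/

open MeasureTheory ENNReal Set

/-- `π` is a coupling of `μ` and `ν`. -/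
def IsCoupling {α : Type*} [MeasurableSpace α] (π : MeasureTheory.Measure (α × α))
    (μ ν : MeasureTheory.Measure α) : Prop :=
  π.map Prod.fst = μ ∧ π.map Prod.snd = ν

/-- The power integral `∫ (x-s)^q dx` over `(s,t)`, valid for singular exponents `-1 < q` as well. -/
lemma lintegral_Ioo_sub_rpow {q : ℝ} (hq : -1 < q) {s t : ℝ} (hst : s ≤ t) :
    ∫⁻ x in Ioo s t, ENNReal.ofReal ((x - s) ^ q)
      = ENNReal.ofReal ((t - s) ^ (q + 1) / (q + 1)) := by
  have hint : IntervalIntegrable (fun x : ℝ => (x - s) ^ q) volume s t := by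
    have := (intervalIntegral.intervalIntegrable_rpow' (a := 0) (b := t - s) hq).comp_sub_right s
    simpa using this
  rw [restrict_Ioo_eq_restrict_Ioc, ← ofReal_integral_eq_lintegral_ofReal
    ((intervalIntegrable_iff_integrableOn_Ioc_of_le hst).1 hint),
    ← intervalIntegral.integral_of_le hst,
    intervalIntegral.integral_comp_sub_right (fun x => x ^ q) s, integral_rpow (Or.inl hq),
    sub_self, Real.zero_rpow (by linarith), sub_zero]
  filter_upwards [ae_restrict_mem measurableSet_Ioc] with x hx
  exact Real.rpow_nonneg (by linarith [hx.1]) _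

lemma lintegral_Ico_sub_rpow {q : ℝ} (hq : -1 < q) {s t : ℝ} (hst : s ≤ t) :
    ∫⁻ y in Ico s t, ENNReal.ofReal ((t - y) ^ q)
      = ENNReal.ofReal ((t - s) ^ (q + 1) / (q + 1)) := by
  have hint : IntervalIntegrable (fun x : ℝ => (t - x) ^ q) volume s t := by
    have := (intervalIntegral.intervalIntegrable_rpow' (a := t - s) (b := 0) hq).comp_sub_left t
    simpa using this
  rw [restrict_Ico_eq_restrict_Ioc, ← ofReal_integral_eq_lintegral_ofReal
    ((intervalIntegrable_iff_integrableOn_Ioc_of_le hst).1 hint),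
    ← intervalIntegral.integral_of_le hst,
    intervalIntegral.integral_comp_sub_left (fun x => x ^ q) t, integral_rpow (Or.inl hq),
    sub_self, Real.zero_rpow (by linarith), sub_zero]
  filter_upwards [ae_restrict_mem measurableSet_Ioc] with x hx
  exact Real.rpow_nonneg (by linarith [hx.2]) _

/-- The kernel `(x-y)^(p-2)` restricted to the triangle `b ≤ y < x < a`, where `z = (a, b)` and
`w = (y, x)`. -/
noncomputable def triKernel (p : ℝ) (z w : ℝ × ℝ) : ℝ≥0∞ :=
  {u : (ℝ × ℝ) × (ℝ × ℝ) | u.1.2 ≤ u.2.1 ∧ u.2.1 < u.2.2 ∧ u.2.2 < u.1.1}.indicator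
    (fun u => ENNReal.ofReal ((u.2.2 - u.2.1) ^ (p - 2))) (z, w)

lemma measurable_triKernel (p : ℝ) : Measurable (Function.uncurry (triKernel p)) := by
  have hs : MeasurableSet
      {u : (ℝ × ℝ) × (ℝ × ℝ) | u.1.2 ≤ u.2.1 ∧ u.2.1 < u.2.2 ∧ u.2.2 < u.1.1} := by
    simp only [ofPred_and]
    refine MeasurableSet.inter ?_ (MeasurableSet.inter ?_ ?_)
    · exact measurableSet_le (by fun_prop) (by fun_prop)
    · exact measurableSet_lt (by fun_prop) (by fun_prop)
    · exact measurableSet_lt (by fun_prop) (by fun_prop)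
  have := Measurable.indicator
    (f := fun u : (ℝ × ℝ) × (ℝ × ℝ) => ENNReal.ofReal ((u.2.2 - u.2.1) ^ (p - 2)))
    (by fun_prop) hs
  exact this

/-- Integrating the kernel over the triangle gives `(a-b)₊^p / (p(p-1))`. -/
lemma lintegral_triKernel {p : ℝ} (hp : 1 < p) (z : ℝ × ℝ) :
    ∫⁻ y, ∫⁻ x, triKernel p z (y, x)
      = ENNReal.ofReal ((max (z.1 - z.2) 0) ^ p / (p * (p - 1))) := by
  obtain ⟨a, b⟩ := z
  have h1 : ∀ y, ∫⁻ x, triKernel p (a, b) (y, x)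
      = (Ico b a).indicator (fun y => ENNReal.ofReal ((a - y) ^ (p - 1) / (p - 1))) y := by
    intro y
    by_cases hy : y ∈ Ico b a
    · rw [indicator_of_mem hy]
      have := lintegral_Ioo_sub_rpow (q := p - 2) (by linarith) hy.2.le
      rw [show p - 2 + 1 = p - 1 by ring] at this
      rw [← this, ← lintegral_indicator measurableSet_Ioo]
      refine lintegral_congr fun x => ?_
      simp only [triKernel, indicator, mem_ofPred_eq, mem_Ioo, hy.1, true_and]
    · rw [indicator_of_notMem hy]
      have : ∀ x, triKernel p (a, b) (y, x) = 0 := by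
        intro x
        refine indicator_of_notMem ?_ _
        rintro ⟨h1, h2, h3⟩
        exact hy ⟨h1, h2.trans h3⟩
      simp [this]
  simp_rw [h1]
  rw [lintegral_indicator measurableSet_Ico]
  rcases le_total b a with hba | hba
  · have h2 : ∀ y, ENNReal.ofReal ((a - y) ^ (p - 1) / (p - 1))
        = ENNReal.ofReal (1 / (p - 1)) * ENNReal.ofReal ((a - y) ^ (p - 1)) := by
      intro y
      rw [← ENNReal.ofReal_mul (by apply div_nonneg <;> linarith)]
      congr 1; ring
    simp_rw [h2]
    rw [lintegral_const_mul _ (by fun_prop), lintegral_Ico_sub_rpow (by linarith) hba,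
      ← ENNReal.ofReal_mul (by apply div_nonneg <;> linarith), max_eq_left (by linarith),
      show p - 1 + 1 = p by ring]
    congr 1
    have : p - 1 ≠ 0 := by linarith
    field_simp
  · rw [max_eq_right (by linarith), Ico_eq_empty (by linarith), Real.zero_rpow (by linarith)]
    simp

/-- Tonelli: the survival-type mass `π (X > x, Y ≤ y)` integrated against the kernel on `y < x`. -/
lemma lintegral_half {p : ℝ} (hp : 1 < p) (π : Measure (ℝ × ℝ)) [IsFiniteMeasure π] :
    ∫⁻ y, ∫⁻ x in Ioi y, π (Ioi x ×ˢ Iic y) * ENNReal.ofReal ((x - y) ^ (p - 2))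
      = ∫⁻ z, ENNReal.ofReal ((max (z.1 - z.2) 0) ^ p / (p * (p - 1))) ∂π := by
  have hm := measurable_triKernel p
  have h1 : ∀ y, ∫⁻ x in Ioi y, π (Ioi x ×ˢ Iic y) * ENNReal.ofReal ((x - y) ^ (p - 2))
      = ∫⁻ x, ∫⁻ z, triKernel p z (y, x) ∂π := by
    intro y
    rw [← lintegral_indicator measurableSet_Ioi]
    refine lintegral_congr fun x => ?_
    have h2 : ∀ z, triKernel p z (y, x) = (Ioi x ×ˢ Iic y).indicator (fun _ =>
        (Ioi y).indicator (fun x => ENNReal.ofReal ((x - y) ^ (p - 2))) x) z := by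
      intro z
      simp only [triKernel, indicator, mem_ofPred_eq, mem_prod, mem_Ioi, mem_Iic]
      split_ifs <;> first | rfl | (exfalso; tauto)
    simp_rw [h2]
    rw [lintegral_indicator_const (measurableSet_Ioi.prod measurableSet_Iic)]
    by_cases hx : x ∈ Ioi y
    · simp [indicator_of_mem hx, mul_comm]
    · simp [indicator_of_notMem hx]
  simp_rw [h1]
  have hm' : Measurable fun w => ∫⁻ z, triKernel p z w ∂π :=
    Measurable.lintegral_prod_left' hm
  rw [lintegral_lintegral (f := fun y x => ∫⁻ z, triKernel p z (y, x) ∂π)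
    hm'.aemeasurable]
  simp only [Prod.mk.eta]
  rw [lintegral_lintegral_swap (f := fun w z => triKernel p z w)
    (hm.comp measurable_swap).aemeasurable]
  refine lintegral_congr fun z => ?_
  rw [← lintegral_triKernel hp z, lintegral_prod]
  exact (hm.comp (measurable_const.prodMk measurable_id)).aemeasurable

lemma measurable_quadrant (π : Measure (ℝ × ℝ)) [IsFiniteMeasure π] :
    Measurable fun w : ℝ × ℝ => π (Ioi w.2 ×ˢ Iic w.1) := by
  have hs : MeasurableSet {u : (ℝ × ℝ) × (ℝ × ℝ) | u.1.2 < u.2.1 ∧ u.2.2 ≤ u.1.1} := by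
    rw [ofPred_and]
    refine MeasurableSet.inter ?_ ?_
    · exact measurableSet_lt (by fun_prop) (by fun_prop)
    · exact measurableSet_le (by fun_prop) (by fun_prop)
  exact measurable_measure_prodMk_left (ν := π) hs

/-- The real-valued form of `lintegral_half`; integrability makes the iterated Bochner
integrals genuine ones. -/
lemma integral_half {p : ℝ} (hp : 1 < p) (π : Measure (ℝ × ℝ)) [IsFiniteMeasure π]
    (hint : Integrable (fun z : ℝ × ℝ => (max (z.1 - z.2) 0) ^ p) π) :
    p * (p - 1) * ∫ y, ∫ x in Ioi y, π.real (Ioi x ×ˢ Iic y) * (x - y) ^ (p - 2)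
      = ∫ z, (max (z.1 - z.2) 0) ^ p ∂π := by
  have hmw : Measurable fun w : ℝ × ℝ =>
      π (Ioi w.2 ×ˢ Iic w.1) * ENNReal.ofReal ((w.2 - w.1) ^ (p - 2)) :=
    (measurable_quadrant π).mul (by fun_prop)
  have h1 : ∀ y, ∫ x in Ioi y, π.real (Ioi x ×ˢ Iic y) * (x - y) ^ (p - 2)
      = (∫⁻ x in Ioi y, π (Ioi x ×ˢ Iic y) * ENNReal.ofReal ((x - y) ^ (p - 2))).toReal := by
    intro y
    have hm1 : Measurable fun x => π.real (Ioi x ×ˢ Iic y) * (x - y) ^ (p - 2) :=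
      ((measurable_quadrant π).comp (measurable_const.prodMk measurable_id)).ennreal_toReal.mul
        (by fun_prop)
    have hpos : ∀ x ∈ Ioi y, 0 ≤ (x - y) ^ (p - 2) := fun x hx =>
      Real.rpow_nonneg (by linarith [mem_Ioi.1 hx]) _
    rw [integral_eq_lintegral_of_nonneg_ae _ hm1.aestronglyMeasurable]
    · congr 1
      refine setLIntegral_congr_fun measurableSet_Ioi fun x hx => ?_
      rw [ENNReal.ofReal_mul measureReal_nonneg, ofReal_measureReal]
    · filter_upwards [ae_restrict_mem measurableSet_Ioi] with x hx
      exact mul_nonneg measureReal_nonneg (hpos x hx)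
  have hmy : Measurable fun y =>
      ∫⁻ x in Ioi y, π (Ioi x ×ˢ Iic y) * ENNReal.ofReal ((x - y) ^ (p - 2)) := by
    simp_rw [← lintegral_indicator measurableSet_Ioi]
    have hs : MeasurableSet {w : ℝ × ℝ | w.1 < w.2} :=
      measurableSet_lt (by fun_prop) (by fun_prop)
    exact Measurable.lintegral_prod_right' (hmw.indicator hs)
  have hint' := hint.div_const (p * (p - 1))
  have hpp : 0 < p * (p - 1) := mul_pos (by linarith) (by linarith)
  have key : ∫⁻ y, ∫⁻ x in Ioi y, π (Ioi x ×ˢ Iic y) * ENNReal.ofReal ((x - y) ^ (p - 2))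
      = ENNReal.ofReal (∫ z, (max (z.1 - z.2) 0) ^ p / (p * (p - 1)) ∂π) := by
    rw [lintegral_half hp, ofReal_integral_eq_lintegral_ofReal hint']
    exact Filter.Eventually.of_forall fun z => by positivity
  simp_rw [h1]
  rw [integral_toReal hmy.aemeasurable
    (ae_lt_top hmy (by rw [key]; exact ENNReal.ofReal_ne_top)), key,
    ENNReal.toReal_ofReal (integral_nonneg fun z => by positivity), integral_div,
    mul_div_cancel₀ _ hpp.ne']

/-- dall'Aglio's identity: for `p > 1` and a coupling `π` of `μ, ν`
with joint distribution function `H`,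
`∫ |y-x|^p dπ = p(p-1) ∫∫_{x>y} [G(y)-H(x,y)](x-y)^{p-2} dx dy
             + p(p-1) ∫∫_{y>x} [F(x)-H(x,y)](y-x)^{p-2} dy dx`. -/
theorem dallAglio_identity (p : ℝ) (hp : 1 < p)
    (μ ν : MeasureTheory.Measure ℝ) [IsProbabilityMeasure μ] [IsProbabilityMeasure ν]
    (hμ : ∫⁻ x, ENNReal.ofReal (|x| ^ p) ∂μ ≠ ⊤)
    (hν : ∫⁻ x, ENNReal.ofReal (|x| ^ p) ∂ν ≠ ⊤)
    (π : MeasureTheory.Measure (ℝ × ℝ)) (hπ : IsCoupling π μ ν)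
    (F G : ℝ → ℝ) (H : ℝ → ℝ → ℝ)
    (hF : ∀ x, F x = (μ (Iic x)).toReal)
    (hG : ∀ y, G y = (ν (Iic y)).toReal)
    (hH : ∀ x y, H x y = (π (Iic x ×ˢ Iic y)).toReal) :
    ∫ z, |z.2 - z.1| ^ p ∂π
      = p * (p - 1) * (∫ y : ℝ, ∫ x in Ioi y, (G y - H x y) * (x - y) ^ (p - 2))
        + p * (p - 1) * (∫ x : ℝ, ∫ y in Ioi x, (F x - H x y) * (y - x) ^ (p - 2)) := by
  obtain ⟨rfl, rfl⟩ := hπ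
  have hfin : IsFiniteMeasure π := by
    refine ⟨?_⟩
    have : (π.map Prod.fst) univ = 1 := measure_univ
    rw [Measure.map_apply measurable_fst MeasurableSet.univ, preimage_univ] at this
    simp [this]
  -- `L^p` membership of both coordinates, hence of their difference
  have hLp : ∀ f : ℝ × ℝ → ℝ, Measurable f →
      ∫⁻ x, ENNReal.ofReal (|x| ^ p) ∂(π.map f) ≠ ⊤ → MemLp f (ENNReal.ofReal p) π := by
    intro f hf h
    rw [lintegral_map (by fun_prop) hf] at h
    rw [← integrable_norm_rpow_iff hf.aestronglyMeasurable (by simp; linarith) (by simp),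
      ENNReal.toReal_ofReal (by linarith)]
    refine (lintegral_ofReal_ne_top_iff_integrable
      (hf.norm.pow_const p).aestronglyMeasurable ?_).1 h
    exact Filter.Eventually.of_forall fun z => by positivity
  have hI : Integrable (fun z : ℝ × ℝ => |z.1 - z.2| ^ p) π := by
    have := ((hLp _ measurable_fst hμ).sub (hLp _ measurable_snd hν)).integrable_norm_rpow
      (by simp; linarith) (by simp)
    rw [ENNReal.toReal_ofReal (by linarith)] at this
    exact this
  have hI1 : Integrable (fun z : ℝ × ℝ => (max (z.1 - z.2) 0) ^ p) π := by
    refine hI.mono' (Measurable.aestronglyMeasurable (by fun_prop)) (Filter.Eventually.of_forall fun z => ?_)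
    rw [Real.norm_of_nonneg (by positivity)]
    exact Real.rpow_le_rpow (le_max_right _ _) (max_le (le_abs_self _) (abs_nonneg _))
      (by linarith)
  have hI2 : Integrable (fun z : ℝ × ℝ => (max (z.2 - z.1) 0) ^ p) π := by
    refine hI.mono' (Measurable.aestronglyMeasurable (by fun_prop)) (Filter.Eventually.of_forall fun z => ?_)
    rw [Real.norm_of_nonneg (by positivity), abs_sub_comm]
    exact Real.rpow_le_rpow (le_max_right _ _) (max_le (le_abs_self _) (abs_nonneg _))
      (by linarith)
  have hsplit : ∀ z : ℝ × ℝ,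
      |z.2 - z.1| ^ p = (max (z.1 - z.2) 0) ^ p + (max (z.2 - z.1) 0) ^ p := by
    intro z
    have h0 : (0 : ℝ) ^ p = 0 := Real.zero_rpow (by linarith)
    rcases le_total z.1 z.2 with h | h
    · rw [abs_of_nonneg (by linarith), max_eq_right (by linarith), max_eq_left (by linarith), h0,
        zero_add]
    · rw [abs_of_nonpos (by linarith), max_eq_left (by linarith), max_eq_right (by linarith), h0,
        add_zero, neg_sub]
  have hGH : ∀ x y, G y - H x y = π.real (Ioi x ×ˢ Iic y) := by
    intro x y
    rw [hG, hH, Measure.map_apply measurable_snd measurableSet_Iic]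
    change π.real _ - π.real _ = _
    rw [← measureReal_sdiff (by rintro z ⟨_, h⟩; exact h)
      (measurableSet_Iic.prod measurableSet_Iic)]
    congr 1
    ext z
    simp only [mem_sdiff, mem_preimage, mem_prod, mem_Iic, mem_Ioi, ← not_le]
    tauto
  -- the second half is the first one for the law of `(Y, X)`
  have hFH : ∀ x y, F x - H x y = (π.map Prod.swap).real (Ioi y ×ˢ Iic x) := by
    intro x y
    rw [hF, hH, Measure.map_apply measurable_fst measurableSet_Iic, measureReal_def,
      Measure.map_apply measurable_swap (measurableSet_Ioi.prod measurableSet_Iic)]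
    change π.real _ - π.real _ = π.real _
    rw [← measureReal_sdiff (by rintro z ⟨h, _⟩; exact h)
      (measurableSet_Iic.prod measurableSet_Iic)]
    congr 1
    ext z
    simp only [mem_sdiff, mem_preimage, mem_prod, mem_Iic, mem_Ioi, ← not_le, Prod.fst_swap,
      Prod.snd_swap]
    tauto
  have hm : Measurable fun z : ℝ × ℝ => (max (z.1 - z.2) 0) ^ p := by fun_prop
  simp_rw [hsplit, hGH, hFH]
  rw [integral_add hI1 hI2, integral_half hp π hI1, integral_half hp (π.map Prod.swap)
    ((integrable_map_measure hm.aestronglyMeasurable measurable_swap.aemeasurable).2 hI2),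
    integral_map measurable_swap.aemeasurable hm.aestronglyMeasurable]
  rfl
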